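/- Under the standing hypotheses (V irreducible integrable with K⊗1 acting by 0 and C⊗1 acting by c), there exist a positive integer p and finitely many elements γ̄₁,…,γ̄_p ∈ h̊* such that the set of weights of V satisfies P(V) ⊆ {γ̄ᵢ + (ξ+n)δ + cω : 1 ≤ i ≤ p, n ∈ ℤ}. -/

import Mathlib

noncomputable section

/-!
Common setup: a realization of the loop affine-Virasoro algebra
`𝔏(A) = ((g̊ ⊗ ℂ[t,t⁻¹] ⊕ ℂK) ⋊ Vir) ⊗ A`.

* `g` plays the role of the finite dimensional simple Lie algebra `g̊`.
* `A` is a commutative associative unital `ℂ`-algebra.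
* `L` plays the role of `𝔏(A)`; the structure fields record the generators
  `E n x a = (x ⊗ tⁿ) ⊗ a`, `D n a = dₙ ⊗ a`, `K a = K ⊗ a`, `C a = C ⊗ a`
  together with the defining bracket relations, and the fact that the
  generators span `L`.
-/

/-- An ideal of a `ℂ`-algebra is cofinite if the quotient is finite dimensional. -/
def IsCofiniteIdeal {A : Type*} [CommRing A] [Algebra ℂ A] (I : Ideal A) : Prop :=
  FiniteDimensional ℂ (A ⧸ I)

/-- A realization of the loop affine-Virasoro algebra `𝔏(A)`. -/
structure LoopAffVir (g : Type*) [LieRing g] [LieAlgebra ℂ g]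
    (A : Type*) [CommRing A] [Algebra ℂ A]
    (L : Type*) [LieRing L] [LieAlgebra ℂ L] : Type _ where
  /-- the Cartan subalgebra `h̊` of `g̊` -/
  H : LieSubalgebra ℂ g
  isCartan : H.IsCartanSubalgebra
  /-- the invariant nondegenerate symmetric bilinear form on `g̊` -/
  form : g →ₗ[ℂ] g →ₗ[ℂ] ℂ
  form_symm : ∀ x y : g, form x y = form y x
  form_nondeg : ∀ x : g, (∀ y : g, form x y = 0) → x = 0
  form_invariant : ∀ x y z : g, form ⁅x, y⁆ z = form x ⁅y, z⁆
  /-- the root space `g̊_α` -/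
  rootSp : Module.Dual ℂ H → Submodule ℂ g
  rootSp_def : ∀ (α : Module.Dual ℂ H) (x : g),
      x ∈ rootSp α ↔ ∀ h : H, ⁅(h : g), x⁆ = α h • x
  /-- a choice of positive roots `Δ̊₊` -/
  Δplus : Set (Module.Dual ℂ H)
  Δplus_root : ∀ α ∈ Δplus, α ≠ 0 ∧ rootSp α ≠ ⊥
  Δplus_cover : ∀ α : Module.Dual ℂ H, α ≠ 0 → rootSp α ≠ ⊥ → α ∈ Δplus ∨ -α ∈ Δplus
  Δplus_disj : ∀ α ∈ Δplus, -α ∉ Δplus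
  /-- `E n x a = (x ⊗ tⁿ) ⊗ a` -/
  E : ℤ → g →ₗ[ℂ] A →ₗ[ℂ] L
  /-- `D n a = dₙ ⊗ a` -/
  D : ℤ → A →ₗ[ℂ] L
  /-- `K a = K ⊗ a` (affine center) -/
  K : A →ₗ[ℂ] L
  /-- `C a = C ⊗ a` (Virasoro center) -/
  C : A →ₗ[ℂ] L
  lie_EE : ∀ (n m : ℤ) (x y : g) (a b : A),
      ⁅E n x a, E m y b⁆ = E (n + m) ⁅x, y⁆ (a * b)
        + (if m = -n then (n : ℂ) * form x y else 0) • K (a * b)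
  lie_DE : ∀ (n m : ℤ) (x : g) (a b : A),
      ⁅D n a, E m x b⁆ = (m : ℂ) • E (m + n) x (a * b)
  lie_DD : ∀ (n m : ℤ) (a b : A),
      ⁅D n a, D m b⁆ = ((m : ℂ) - (n : ℂ)) • D (n + m) (a * b)
        + (if m = -n then (((n : ℂ) ^ 3 - (n : ℂ)) / 12) else 0) • C (a * b)
  K_central : ∀ (a : A) (z : L), ⁅K a, z⁆ = 0
  C_central : ∀ (a : A) (z : L), ⁅C a, z⁆ = 0
  span_top : Submodule.span ℂ
      ({z : L | ∃ (n : ℤ) (x : g) (a : A), z = E n x a}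
        ∪ {z : L | ∃ (n : ℤ) (a : A), z = D n a}
        ∪ {z : L | ∃ a : A, z = K a}
        ∪ {z : L | ∃ a : A, z = C a}) = ⊤

namespace LoopAffVir

variable {g A L : Type*} [LieRing g] [LieAlgebra ℂ g] [CommRing A] [Algebra ℂ A]
  [LieRing L] [LieAlgebra ℂ L] (S : LoopAffVir g A L)

/-- Generators of the Cartan subalgebra `h̄ = h̊ ⊕ ℂK ⊕ ℂd₀ ⊕ ℂC ⊆ 𝔏 ⊗ 1`. -/
def cartanSet : Set L :=
  {z : L | ∃ h ∈ S.H, z = S.E 0 h 1} ∪ {S.K 1, S.D 0 1, S.C 1}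

/-- The Cartan subalgebra `h̄` of `𝔏(A)`. -/
def cartan : Submodule ℂ L := Submodule.span ℂ S.cartanSet

/-- `h ∈ h̊` as an element of `h̄`. -/
def eH (h : S.H) : S.cartan :=
  ⟨S.E 0 h 1, Submodule.subset_span (Set.mem_union_left _ ⟨(h : g), h.2, rfl⟩)⟩

/-- `K ⊗ 1` as an element of `h̄`. -/
def K1 : S.cartan :=
  ⟨S.K 1, Submodule.subset_span (Set.mem_union_right _ (by simp))⟩

/-- `d₀ ⊗ 1` as an element of `h̄`. -/
def d0 : S.cartan :=
  ⟨S.D 0 1, Submodule.subset_span (Set.mem_union_right _ (by simp))⟩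

/-- `C ⊗ 1` as an element of `h̄`. -/
def C1 : S.cartan :=
  ⟨S.C 1, Submodule.subset_span (Set.mem_union_right _ (by simp))⟩

variable (V : Type*) [AddCommGroup V] [Module ℂ V] [LieRingModule L V] [LieModule ℂ L V]

/-- The weight space of an `𝔏(A)`-module attached to `χ ∈ h̄*`. -/
def wtSpace (χ : Module.Dual ℂ S.cartan) : Submodule ℂ V where
  carrier := {v : V | ∀ h : S.cartan, ⁅(h : L), v⁆ = χ h • v}
  add_mem' := by
    intro a b ha hb h
    rw [lie_add, ha h, hb h, smul_add]
  zero_mem' := by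
    intro h
    rw [lie_zero, smul_zero]
  smul_mem' := by
    intro c v hv h
    rw [lie_smul, hv h, smul_comm]

/-- The set of weights `P(V)`. -/
def weights : Set (Module.Dual ℂ S.cartan) := {χ | S.wtSpace V χ ≠ ⊥}

/-- `V` is a weight module: it is the (direct) sum of its weight spaces. -/
def IsWeightModule : Prop := (⨆ χ : Module.Dual ℂ S.cartan, S.wtSpace V χ) = ⊤

/-- All weight spaces are finite dimensional. -/
def HasFinDimWeightSpaces : Prop :=
  ∀ χ : Module.Dual ℂ S.cartan, FiniteDimensional ℂ (S.wtSpace V χ)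

/-- Integrability: `V` is a weight module with finite dimensional weight spaces on which all
real root vectors `(x ⊗ tⁿ) ⊗ a`, `x ∈ g̊_α`, `α ∈ Δ̊`, act locally nilpotently. -/
def IsIntegrable : Prop :=
  S.IsWeightModule V ∧ S.HasFinDimWeightSpaces V ∧
    ∀ α : Module.Dual ℂ S.H, α ≠ 0 → S.rootSp α ≠ ⊥ →
      ∀ x ∈ S.rootSp α, ∀ (n : ℤ) (a : A) (v : V),
        ∃ N : ℕ, ((LieModule.toEnd ℂ L V) (S.E n x a) ^ N) v = 0

/-- The highest weight space
`M = {v ∈ V : (x ⊗ tⁿ ⊗ a) v = 0 ∀ x ∈ g̊_α, α ∈ Δ̊₊, n ∈ ℤ, a ∈ A}` for the second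
triangular decomposition. -/
def hwSpace : Submodule ℂ V where
  carrier := {v : V | ∀ α ∈ S.Δplus, ∀ x ∈ S.rootSp α, ∀ (n : ℤ) (a : A), ⁅S.E n x a, v⁆ = 0}
  add_mem' := by
    intro u w hu hw α hα x hx n a
    rw [lie_add, hu α hα x hx n a, hw α hα x hx n a, add_zero]
  zero_mem' := by
    intro α hα x hx n a
    rw [lie_zero]
  smul_mem' := by
    intro t v hv α hα x hx n a
    rw [lie_smul, hv α hα x hx n a, smul_zero]

/-- Generators of `𝔏(A)⁺ = (n₊ ⊕ Vir⁺) ⊗ A` for the natural triangular decomposition. -/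
def plusSet : Set L :=
  {z : L | ∃ n : ℤ, 0 < n ∧ ∃ (x : g) (a : A), z = S.E n x a} ∪
  {z : L | ∃ α ∈ S.Δplus, ∃ x ∈ S.rootSp α, ∃ a : A, z = S.E 0 x a} ∪
  {z : L | ∃ n : ℤ, 0 < n ∧ ∃ a : A, z = S.D n a}

/-- Generators of `𝔏(A)⁻ = (n₋ ⊕ Vir⁻) ⊗ A` for the natural triangular decomposition. -/
def minusSet : Set L :=
  {z : L | ∃ n : ℤ, n < 0 ∧ ∃ (x : g) (a : A), z = S.E n x a} ∪
  {z : L | ∃ α ∈ S.Δplus, ∃ x ∈ S.rootSp (-α), ∃ a : A, z = S.E 0 x a} ∪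
  {z : L | ∃ n : ℤ, n < 0 ∧ ∃ a : A, z = S.D n a}

/-- Generators of `𝔏(A)⁰ = h̄ ⊗ A`. -/
def cartanASet : Set L :=
  {z : L | ∃ h ∈ S.H, ∃ a : A, z = S.E 0 h a} ∪ {z : L | ∃ a : A, z = S.K a}
    ∪ {z : L | ∃ a : A, z = S.D 0 a} ∪ {z : L | ∃ a : A, z = S.C a}

/-- `𝔏(A)⁰ = h̄ ⊗ A` as a subspace of `L`. -/
def cartanA : Submodule ℂ L := Submodule.span ℂ S.cartanASet

/-- `h ⊗ a`, `h ∈ h̊`, as an element of `h̄ ⊗ A`. -/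
def eHA (h : S.H) (a : A) : S.cartanA :=
  ⟨S.E 0 h a, Submodule.subset_span
    (Set.mem_union_left _ (Set.mem_union_left _ (Set.mem_union_left _ ⟨(h : g), h.2, a, rfl⟩)))⟩

/-- `K ⊗ a` as an element of `h̄ ⊗ A`. -/
def KA (a : A) : S.cartanA :=
  ⟨S.K a, Submodule.subset_span
    (Set.mem_union_left _ (Set.mem_union_left _ (Set.mem_union_right _ ⟨a, rfl⟩)))⟩

/-- `d₀ ⊗ a` as an element of `h̄ ⊗ A`. -/
def DA0 (a : A) : S.cartanA :=
  ⟨S.D 0 a, Submodule.subset_span (Set.mem_union_left _ (Set.mem_union_right _ ⟨a, rfl⟩))⟩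

/-- `C ⊗ a` as an element of `h̄ ⊗ A`. -/
def CA (a : A) : S.cartanA :=
  ⟨S.C a, Submodule.subset_span (Set.mem_union_right _ ⟨a, rfl⟩)⟩

/-- `V` is a highest weight module with highest weight `ψ : h̄ ⊗ A → ℂ` for the natural
triangular decomposition: some nonzero vector `v` is annihilated by `𝔏(A)⁺`, is a
`ψ`-eigenvector for `h̄ ⊗ A`, and generates `V`. -/
def IsHWModule (ψ : Module.Dual ℂ S.cartanA) : Prop :=
  ∃ v : V, v ≠ 0 ∧ (∀ z ∈ S.plusSet, ⁅z, v⁆ = 0) ∧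
    (∀ h : S.cartanA, ⁅(h : L), v⁆ = ψ h • v) ∧
    ∀ W : LieSubmodule ℂ L V, v ∈ W → W = ⊤

/-- `(𝔏 ⊗ I) ⬝ V = 0`. -/
def Annihilates (I : Ideal A) : Prop :=
  ∀ a ∈ I, (∀ (n : ℤ) (x : g) (v : V), ⁅S.E n x a, v⁆ = 0) ∧
    (∀ (n : ℤ) (v : V), ⁅S.D n a, v⁆ = 0) ∧
    (∀ v : V, ⁅S.K a, v⁆ = 0) ∧ (∀ v : V, ⁅S.C a, v⁆ = 0)

/-- `(𝔏₀ ⊗ R)` kills the subspace `X`, where `𝔏₀ = (h̊ ⊗ ℂ[t,t⁻¹] ⊕ ℂK) ⋊ Vir`. -/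
def ZeroPartAnnOn (R : Ideal A) (X : Submodule ℂ V) : Prop :=
  ∀ a ∈ R, ∀ v ∈ X,
    (∀ (n : ℤ) (h : g), h ∈ S.H → ⁅S.E n h a, v⁆ = 0) ∧
    (∀ n : ℤ, ⁅S.D n a, v⁆ = 0) ∧ ⁅S.K a, v⁆ = 0 ∧ ⁅S.C a, v⁆ = 0

/-- Generators of `𝔏(A)₀ = ((h̊ ⊗ ℂ[t,t⁻¹] ⊕ ℂK) ⋊ Vir) ⊗ A`. -/
def zeroPartSet : Set L :=
  {z : L | ∃ (n : ℤ) (h : g), h ∈ S.H ∧ ∃ a : A, z = S.E n h a}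
    ∪ {z : L | ∃ a : A, z = S.K a}
    ∪ {z : L | ∃ (n : ℤ) (a : A), z = S.D n a}
    ∪ {z : L | ∃ a : A, z = S.C a}

/-- Generators of `g(A) = (g̊ ⊗ ℂ[t,t⁻¹] ⊕ ℂK ⊕ ℂd₀) ⊗ A`. -/
def gASet : Set L :=
  {z : L | ∃ (n : ℤ) (x : g) (a : A), z = S.E n x a}
    ∪ {z : L | ∃ a : A, z = S.K a} ∪ {z : L | ∃ a : A, z = S.D 0 a}

/-- Generators of `(h̊ ⊗ ℂ[t,t⁻¹] ⊕ ℂK) ⊗ A`. -/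
def heisSet : Set L :=
  {z : L | ∃ (n : ℤ) (h : g), h ∈ S.H ∧ ∃ a : A, z = S.E n h a}
    ∪ {z : L | ∃ a : A, z = S.K a}

/-- The smallest subspace of `V` containing `X` and stable under the operators in `Ops`;
this models `U(⋯) ⬝ X`. -/
def opClosure (Ops : Set L) (X : Submodule ℂ V) : Submodule ℂ V :=
  sInf {N : Submodule ℂ V | X ≤ N ∧ ∀ z ∈ Ops, ∀ v ∈ N, ⁅z, v⁆ ∈ N}

/-- The reflection `λ ↦ λ - λ(b) • β` on `h̄*`. -/
def reflMap (b : S.cartan) (β : Module.Dual ℂ S.cartan) :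
    Module.End ℂ (Module.Dual ℂ S.cartan) :=
  LinearMap.id - LinearMap.smulRight (Module.Dual.eval ℂ S.cartan b) β

/-- Given `ν⁻¹ : h̊* → h̊` (inverse of the form), the coroot
`β∨ = α∨ + (2 / ⟨α,α⟩) K ∈ h̄` of the real root `β = α + nδ`. -/
def corootOf (nu : Module.Dual ℂ S.H → S.H) (α : Module.Dual ℂ S.H) : S.cartan :=
  (2 / α (nu α)) • (S.eH (nu α) + S.K1)

/-- The (affine) Weyl group `W` of `𝔏(A)`, generated by the reflections in the real
roots `β = α + nδ`, acting on `h̄*`. -/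
def weylMonoid (nu : Module.Dual ℂ S.H → S.H)
    (ext : Module.Dual ℂ S.H →ₗ[ℂ] Module.Dual ℂ S.cartan)
    (δf : Module.Dual ℂ S.cartan) :
    Submonoid (Module.End ℂ (Module.Dual ℂ S.cartan)) :=
  Submonoid.closure {w | ∃ (α : Module.Dual ℂ S.H) (n : ℤ), α ≠ 0 ∧ S.rootSp α ≠ ⊥ ∧
    w = S.reflMap (S.corootOf nu α) (ext α + (n : ℂ) • δf)}

/-- The reflection `σ_α : h ↦ h - α(h) • α∨` on `h̊`. -/
def finReflMap (nu : Module.Dual ℂ S.H → S.H) (α : Module.Dual ℂ S.H) :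
    Module.End ℂ S.H :=
  LinearMap.id - LinearMap.smulRight (α : S.H →ₗ[ℂ] ℂ) ((2 / α (nu α)) • nu α)

/-- The finite Weyl group `W̊` of `g̊`, acting on `h̊`. -/
def finWeyl (nu : Module.Dual ℂ S.H → S.H) : Submonoid (Module.End ℂ S.H) :=
  Submonoid.closure {w | ∃ α : Module.Dual ℂ S.H, α ≠ 0 ∧ S.rootSp α ≠ ⊥ ∧
    w = S.finReflMap nu α}

/-- `ℤ[W̊(θ∨)] ⊆ h̊`: the additive group generated by the `W̊`-orbit of `θ∨`. -/
def thetaOrbitSpan (nu : Module.Dual ℂ S.H → S.H) (θ : Module.Dual ℂ S.H) :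
    AddSubgroup S.H :=
  AddSubgroup.closure {h | ∃ w ∈ S.finWeyl nu, h = w ((2 / θ (nu θ)) • nu θ)}

/-- The `d₀`-eigenspace of `V` for the eigenvalue `μ`. -/
def d0Eig (μ : ℂ) : Submodule ℂ V where
  carrier := {v : V | ⁅S.D 0 1, v⁆ = μ • v}
  add_mem' := by
    intro a b ha hb
    show ⁅S.D 0 1, a + b⁆ = μ • (a + b)
    rw [lie_add, ha, hb, smul_add]
  zero_mem' := by
    show ⁅S.D 0 1, (0 : V)⁆ = μ • (0 : V)
    rw [lie_zero, smul_zero]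
  smul_mem' := by
    intro c v hv
    show ⁅S.D 0 1, c • v⁆ = μ • c • v
    rw [lie_smul, hv, smul_comm]

end LoopAffVir

end

section Sl2

variable {R : Type*} [Ring R]

/-- The commutation rule `e^(N+1) f = f e^(N+1) + (N+1) e^N (h + N)` of an `sl₂`-triple. -/
theorem sl2_pow_succ_mul {e f h : R} (hef : e * f = f * e + h) (hhe : h * e = e * h + 2 * e)
    (N : ℕ) : e ^ (N + 1) * f = f * e ^ (N + 1) + (N + 1) * (e ^ N * (h + N)) := by
  induction N with
  | zero => simp [hef]
  | succ N ih =>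
    have hc : ∀ k : ℕ, e ^ k * h * e = e ^ k * e * h + 2 * (e ^ k * e) := fun k => by
      rw [mul_assoc, hhe]; noncomm_ring
    have h1 : e ^ (N + 1 + 1) * f = e ^ (N + 1) * f * e + e ^ (N + 1) * h := by
      rw [pow_succ e (N + 1), mul_assoc, hef, mul_add, mul_assoc]
    rw [h1, ih]
    have h2 : (f * e ^ (N + 1) + (↑N + 1) * (e ^ N * (h + ↑N))) * e
        = f * e ^ (N + 1 + 1) + (N + 1) * (e ^ N * h * e + N * (e ^ N * e)) := by
      have : e ^ N * (N : R) = N * e ^ N := (Nat.cast_commute N _).symm.eq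
      simp only [mul_add, add_mul, this, pow_succ, mul_assoc]
    have h3 : e ^ (N + 1) * (h + ((N + 1 : ℕ) : R)) = e ^ N * e * h + (N + 1) * (e ^ N * e) := by
      have : e ^ (N + 1) * ((N + 1 : ℕ) : R) = ((N + 1 : ℕ) : R) * e ^ (N + 1) :=
        (Nat.cast_commute (N + 1) _).symm.eq
      rw [mul_add, this, pow_succ]; push_cast; rfl
    rw [h2, h3, hc, pow_succ e N]
    push_cast
    noncomm_ring

variable {V : Type*} [AddCommGroup V] [Module ℂ V]

/-- On an `h`-eigenspace whose eigenvalue is not in `-ℕ`, the operator `e f` is injective as soon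
as `e` is locally nilpotent. -/
theorem eq_zero_of_sl2_ef_eq_zero {e f h : Module.End ℂ V} (hef : e * f = f * e + h)
    (hhe : h * e = e * h + 2 * e) {m : ℂ} (hm : ∀ N : ℕ, m + N ≠ 0) {v : V} (hv : h v = m • v)
    (hnil : ∃ N, (e ^ N) v = 0) (h0 : e (f v) = 0) : v = 0 := by
  obtain ⟨N, hN⟩ := hnil
  induction N with
  | zero => simpa using hN
  | succ N ih =>
    apply ih
    have key := LinearMap.congr_fun (sl2_pow_succ_mul hef hhe N) v
    have hl : (e ^ (N + 1) * f) v = 0 := by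
      rw [pow_succ, mul_assoc, Module.End.mul_apply, Module.End.mul_apply, h0, map_zero]
    have hr : (f * e ^ (N + 1) + (N + 1) * (e ^ N * (h + N))) v
        = ((N + 1 : ℂ) * (m + N)) • (e ^ N) v := by
      have e1 : (h + (N : Module.End ℂ V)) v = (m + N) • v := by
        simp [hv, add_smul, Module.End.natCast_apply, Nat.cast_smul_eq_nsmul]
      have e2 : ∀ w : V, ((N : Module.End ℂ V) + 1) w = (N + 1 : ℂ) • w := fun w => by
        simp [add_smul, Module.End.natCast_apply, Nat.cast_smul_eq_nsmul]
      rw [LinearMap.add_apply, Module.End.mul_apply, hN, map_zero, zero_add, Module.End.mul_apply,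
        Module.End.mul_apply, e1, e2, map_smul, smul_smul]
    rw [hl, hr] at key
    exact (smul_eq_zero.mp key.symm).resolve_left
      (mul_ne_zero (by exact_mod_cast Nat.succ_ne_zero N) (hm N))

/-- Integrality of the eigenvalues of `h` in an integrable `sl₂`-module. -/
theorem exists_int_of_sl2_integrable {e f h : Module.End ℂ V} (hef : e * f = f * e + h)
    (hhe : h * e = e * h + 2 * e) (hhf : h * f = f * h - 2 * f)
    (hnil : ∀ v : V, ∃ N, (e ^ N) v = 0) (hnilf : ∀ v : V, ∃ N, (f ^ N) v = 0)
    {m : ℂ} {v : V} (hv : h v = m • v) (hv0 : v ≠ 0) : ∃ k : ℤ, m = k := by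
  by_contra! hm
  have hstep : ∀ k : ℕ, h ((f ^ k) v) = (m - 2 * k) • (f ^ k) v ∧ (f ^ k) v ≠ 0 := by
    intro k
    induction k with
    | zero => simpa using ⟨hv, hv0⟩
    | succ k ih =>
      rw [pow_succ', Module.End.mul_apply]
      refine ⟨?_, fun h0 => ih.2 (eq_zero_of_sl2_ef_eq_zero hef hhe ?_ ih.1 (hnil _)
        (by rw [h0, map_zero]))⟩
      · have := LinearMap.congr_fun hhf ((f ^ k) v)
        simp only [Module.End.mul_apply, LinearMap.sub_apply, ih.1, map_smul,
          Module.End.ofNat_apply] at this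
        rw [this, ← Nat.cast_smul_eq_nsmul ℂ]
        push_cast
        module
      · intro N hN
        exact hm (2 * k - N) (by push_cast; linear_combination hN)
  obtain ⟨N, hN⟩ := hnilf v
  exact (hstep N).2 hN

end Sl2

section LocallyFinite

variable {V : Type*} [AddCommGroup V] [Module ℂ V]

/-- An endomorphism is locally finite if every vector lies in a finite-dimensional stable
subspace. -/
def IsLocallyFiniteEnd (T : Module.End ℂ V) : Prop :=
  ∀ v : V, ∃ W : Submodule ℂ V, FiniteDimensional ℂ W ∧ v ∈ W ∧ ∀ w ∈ W, T w ∈ W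

theorem isLocallyFiniteEnd_of_locally_nilpotent {T : Module.End ℂ V}
    (h : ∀ v : V, ∃ N, (T ^ N) v = 0) : IsLocallyFiniteEnd T := by
  intro v
  obtain ⟨N, hN⟩ := h v
  refine ⟨Submodule.span ℂ (Set.range fun k : Fin (N + 1) => (T ^ (k : ℕ)) v),
    FiniteDimensional.span_of_finite ℂ (Set.finite_range _),
    Submodule.subset_span ⟨0, by simp⟩, fun w hw => ?_⟩
  induction hw using Submodule.span_induction with
  | mem x hx =>
    obtain ⟨k, rfl⟩ := hx
    have hk : T ((T ^ (k : ℕ)) v) = (T ^ ((k : ℕ) + 1)) v := by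
      rw [pow_succ', Module.End.mul_apply]
    by_cases hlt : (k : ℕ) + 1 < N + 1
    · exact Submodule.subset_span ⟨⟨k + 1, hlt⟩, hk.symm⟩
    · have : (k : ℕ) + 1 = 1 + N := by omega
      simp only [hk]
      rw [this, pow_add, Module.End.mul_apply, hN, map_zero]
      exact Submodule.zero_mem _
  | zero => simp
  | add x y _ _ hx hy => rw [map_add]; exact Submodule.add_mem _ hx hy
  | smul a x _ hx => rw [map_smul]; exact Submodule.smul_mem _ _ hx

/-- Finite-dimensional subspaces lie in finite-dimensional stable ones. -/
theorem IsLocallyFiniteEnd.exists_stable {T : Module.End ℂ V} (h : IsLocallyFiniteEnd T)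
    (X : Submodule ℂ V) [FiniteDimensional ℂ X] :
    ∃ W : Submodule ℂ V, FiniteDimensional ℂ W ∧ X ≤ W ∧ ∀ w ∈ W, T w ∈ W := by
  obtain ⟨s, rfl⟩ := Module.Finite.iff_fg.mp (inferInstance : Module.Finite ℂ X)
  choose W hWf hvW hWT using h
  refine ⟨⨆ v : s, W v, inferInstance, Submodule.span_le.mpr fun v hv =>
    (le_iSup (fun v : s => W v) ⟨v, hv⟩) (hvW v), fun w hw => ?_⟩
  induction hw using Submodule.iSup_induction' with
  | mem i x hx => exact (le_iSup (fun v : s => W v) i) (hWT i x hx)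
  | zero => simp
  | add x y _ _ hx hy => rw [map_add]; exact Submodule.add_mem _ hx hy

/-- Ordered monomials in finitely many locally finite operators map a finite-dimensional subspace
into a finite-dimensional subspace. -/
theorem exists_finiteDimensional_forall_ordered_monomial {ι : Type*} (T : ι → Module.End ℂ V)
    (hT : ∀ i, IsLocallyFiniteEnd (T i)) (J : List ι) (X : Submodule ℂ V)
    [FiniteDimensional ℂ X] : ∃ W : Submodule ℂ V, FiniteDimensional ℂ W ∧
      ∀ c : ι → ℕ, ∀ x ∈ X, (J.map fun j => T j ^ c j).prod x ∈ W := by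
  induction J with
  | nil => exact ⟨X, inferInstance, fun c x hx => by simpa using hx⟩
  | cons j J ih =>
    obtain ⟨W, hW, hWm⟩ := ih
    obtain ⟨W', hW', hle, hst⟩ := (hT j).exists_stable W
    refine ⟨W', hW', fun c x hx => ?_⟩
    rw [List.map_cons, List.prod_cons, Module.End.mul_apply]
    have : ∀ k : ℕ, ∀ w ∈ W', (T j ^ k) w ∈ W' := by
      intro k
      induction k with
      | zero => intro w hw; simpa using hw
      | succ k ih => intro w hw; rw [pow_succ', Module.End.mul_apply]; exact hst _ (ih w hw)
    exact this _ _ (hle (hWm c x hx))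

end LocallyFinite

section PBW

variable {g V ι : Type*} [LieRing g] [LieAlgebra ℂ g] [AddCommGroup V] [Module ℂ V]

/-- The span of all products of at most `n` of the operators `ρ (s i)` applied to elements of
`X`. -/
def wordSpan (ρ : g →ₗ[ℂ] Module.End ℂ V) (s : ι → g) (X : Submodule ℂ V) (n : ℕ) :
    Submodule ℂ V :=
  Submodule.span ℂ {v | ∃ l : List ι, l.length ≤ n ∧ ∃ x ∈ X, v = (l.map fun i => ρ (s i)).prod x}

variable {ρ : g →ₗ[ℂ] Module.End ℂ V} {s : ι → g}

theorem apply_mem_wordSpan (hs : Submodule.span ℂ (Set.range s) = ⊤)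
    {X : Submodule ℂ V} {n : ℕ} (y : g)
    {v : V} (hv : v ∈ wordSpan ρ s X n) : ρ y v ∈ wordSpan ρ s X (n + 1) := by
  have hy : y ∈ Submodule.span ℂ (Set.range s) := hs ▸ Submodule.mem_top
  induction hy using Submodule.span_induction with
  | mem y hy =>
    obtain ⟨i, rfl⟩ := hy
    induction hv using Submodule.span_induction with
    | mem v hv =>
      obtain ⟨l, hl, x, hx, rfl⟩ := hv
      exact Submodule.subset_span ⟨i :: l, by simpa using hl, x, hx, by simp⟩
    | zero => simp
    | add x y _ _ hx hy => rw [map_add]; exact Submodule.add_mem _ hx hy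
    | smul a x _ hx => rw [map_smul]; exact Submodule.smul_mem _ _ hx
  | zero => simp
  | add x y _ _ hx hy => rw [map_add]; exact Submodule.add_mem _ hx hy
  | smul a x _ hx => rw [map_smul]; exact Submodule.smul_mem _ _ hx

/-- Permuting the factors of a word changes it only by shorter words. -/
theorem perm_word_sub_mem (hs : Submodule.span ℂ (Set.range s) = ⊤)
    (hρ : ∀ x y, ρ x * ρ y = ρ y * ρ x + ρ ⁅x, y⁆) {X : Submodule ℂ V}
    {l l' : List ι} (h : l.Perm l') {x : V} (hx : x ∈ X) :
    (l.map fun i => ρ (s i)).prod x - (l'.map fun i => ρ (s i)).prod x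
      ∈ wordSpan ρ s X (l.length - 1) := by
  induction h with
  | nil => simp
  | @cons y l l' h ih =>
    rcases l with _ | ⟨z, l⟩
    · rw [List.nil_perm.mp h]; simp
    · have := apply_mem_wordSpan hs (s y) ih
      simpa [map_sub] using this
  | swap a b l =>
    have h1 : (l.map fun i => ρ (s i)).prod x ∈ wordSpan ρ s X l.length :=
      Submodule.subset_span ⟨l, le_rfl, x, hx, rfl⟩
    have h2 := apply_mem_wordSpan hs ⁅s b, s a⁆ h1
    have := LinearMap.congr_fun (hρ (s b) (s a)) ((l.map fun i => ρ (s i)).prod x)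
    simp only [Module.End.mul_apply, LinearMap.add_apply] at this
    simpa [this] using h2
  | trans h1 _ ih1 ih2 =>
    rw [← h1.length_eq] at ih2
    simpa using Submodule.add_mem _ ih1 ih2

/-- If a finite-dimensional Lie algebra is spanned by elements acting by locally finite operators,
then every finite-dimensional subspace generates a finite-dimensional submodule. -/
theorem exists_finiteDimensional_stable (hs : Submodule.span ℂ (Set.range s) = ⊤)
    [Finite ι]
    (hρ : ∀ x y, ρ x * ρ y = ρ y * ρ x + ρ ⁅x, y⁆) (hfin : ∀ i, IsLocallyFiniteEnd (ρ (s i)))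
    (X : Submodule ℂ V) [FiniteDimensional ℂ X] :
    ∃ P : Submodule ℂ V, FiniteDimensional ℂ P ∧ X ≤ P ∧ ∀ y : g, ∀ v ∈ P, ρ y v ∈ P := by
  classical
  have := Fintype.ofFinite ι
  obtain ⟨W, hW, hmon⟩ := exists_finiteDimensional_forall_ordered_monomial
    (fun i => ρ (s i)) hfin Finset.univ.toList X
  have hle : ∀ n, wordSpan ρ s X n ≤ W := by
    intro n
    induction n using Nat.strong_induction_on with
    | _ n ih =>
      refine Submodule.span_le.mpr ?_
      rintro _ ⟨l, hl, x, hx, rfl⟩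
      let l' := (Finset.univ : Finset ι).toList.flatMap fun i => List.replicate (l.count i) i
      have hperm : l.Perm l' := by
        rw [List.perm_iff_count]
        intro i
        rw [List.count_flatMap]
        simp [Function.comp_def, List.count_replicate, Finset.sum_map_toList]
      have hl' : (l'.map fun i => ρ (s i)).prod x ∈ W := by
        have := hmon (fun i => l.count i) x hx
        convert this using 2
        simp only [l', List.map_flatMap, List.map_replicate]
        induction (Finset.univ : Finset ι).toList with
        | nil => simp
        | cons a L ihL => simp [ihL]
      rcases l with _ | ⟨a, l⟩
      · rw [List.nil_perm.mp hperm] at hl'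
        exact hl'
      · have hd := ih l.length (by simp at hl; omega) (perm_word_sub_mem hs hρ hperm hx)
        simpa using W.add_mem hd hl'
  have hP : (⨆ n, wordSpan ρ s X n) ≤ W := iSup_le hle
  refine ⟨⨆ n, wordSpan ρ s X n, Submodule.finiteDimensional_of_le hP, fun x hx => ?_,
    fun y v hv => ?_⟩
  · exact (le_iSup (wordSpan ρ s X) 0) (Submodule.subset_span ⟨[], le_rfl, x, hx, by simp⟩)
  · induction hv using Submodule.iSup_induction' with
    | mem n x hx => exact (le_iSup (wordSpan ρ s X) (n + 1)) (apply_mem_wordSpan hs y hx)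
    | zero => simp
    | add x y _ _ hx hy => rw [map_add]; exact Submodule.add_mem _ hx hy

end PBW

namespace LoopAffVir

section Cartan

open LieAlgebra LieAlgebra.IsKilling LieModule

variable {g : Type*} [LieRing g] [LieAlgebra ℂ g] [FiniteDimensional ℂ g]
  [LieAlgebra.IsKilling ℂ g]
  (H : LieSubalgebra ℂ g) [H.IsCartanSubalgebra]

theorem finite_setOf_forall_apply_coroot_mem (T : H.root → Set ℂ) (hT : ∀ i, (T i).Finite) :
    {γ : Module.Dual ℂ H | ∀ i : H.root, γ (coroot i.1) ∈ T i}.Finite := by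
  refine Set.Finite.of_finite_image (f := fun γ (i : H.root) => γ (coroot i.1))
    ((Set.Finite.pi' hT).subset ?_) ?_
  · rintro _ ⟨γ, hγ, rfl⟩
    exact hγ
  · intro γ _ γ' _ h
    have hspan := RootPairing.IsRootSystem.span_coroot_eq_top (P := rootSystem H)
    refine LinearMap.ext_on_range (v := (rootSystem H).coroot) hspan fun i => ?_
    exact congrFun h i

theorem exists_nat_rootForm (γ : Module.Dual ℂ H)
    (hγ : ∀ i : H.root, ∃ k : ℤ, γ (coroot i.1) = k) :
    ∃ N : ℕ, (rootSystem H).RootForm γ γ = N := by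
  choose k hk using hγ
  refine ⟨∑ i, (k i).natAbs ^ 2, ?_⟩
  rw [RootPairing.rootForm_apply_apply]
  push_cast
  refine Finset.sum_congr rfl fun i _ => ?_
  have : (rootSystem H).coroot' i γ = k i := hk i
  rw [this, Nat.cast_natAbs, ← Int.cast_pow, sq_abs, sq, Int.cast_mul]

theorem exists_int_root_apply_coroot (i j : H.root) :
    ∃ k : ℤ, (rootSystem H).root i (coroot j.1) = k := by
  obtain ⟨k, hk⟩ := RootPairing.exists_value (P := rootSystem H) (S := ℤ) i j
  exact ⟨k, hk.symm⟩

theorem exists_int_sub_root_apply_coroot {γ : Module.Dual ℂ H}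
    (hγ : ∀ i : H.root, ∃ k : ℤ, γ (coroot i.1) = k) (i j : H.root) :
    ∃ k : ℤ, (γ - (rootSystem H).root i) (coroot j.1) = k := by
  obtain ⟨k, hk⟩ := hγ j
  obtain ⟨l, hl⟩ := exists_int_root_apply_coroot H i j
  exact ⟨k - l, by rw [LinearMap.sub_apply, hk, hl, Int.cast_sub]⟩

/-- Subtracting a root `α` with `⟨γ, α∨⟩ ≥ 2` strictly decreases the canonical form. -/
theorem exists_lt_rootForm_sub_root {γ : Module.Dual ℂ H}
    (hγ : ∀ i : H.root, ∃ k : ℤ, γ (coroot i.1) = k) {N : ℕ}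
    (hN : (rootSystem H).RootForm γ γ = N) (i : H.root) {k : ℤ} (hk : γ (coroot i.1) = k)
    (hk2 : 2 ≤ k) :
    ∃ N' < N, (rootSystem H).RootForm (γ - (rootSystem H).root i)
      (γ - (rootSystem H).root i) = (N' : ℕ) := by
  obtain ⟨N', hN'⟩ := exists_nat_rootForm H _ (exists_int_sub_root_apply_coroot H hγ i)
  obtain ⟨r, hr⟩ := exists_nat_rootForm H ((rootSystem H).root i) (exists_int_root_apply_coroot H i)
  have hr0 : r ≠ 0 := by
    rintro rfl
    exact RootPairing.IsAnisotropic.rootForm_root_ne_zero (P := rootSystem H) i (by simpa using hr)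
  refine ⟨N', ?_, hN'⟩
  have hsymm : (rootSystem H).RootForm ((rootSystem H).root i) γ =
      (rootSystem H).RootForm γ ((rootSystem H).root i) :=
    ((rootSystem H).rootForm_symmetric.eq ((rootSystem H).root i) γ)
  have hrefl : (rootSystem H).reflection i γ = γ - (k : ℂ) • (rootSystem H).root i := by
    rw [RootPairing.reflection_apply, ← hk]
    rfl
  have hk' := (rootSystem H).rootForm_reflection_reflection_apply i γ γ
  rw [hrefl] at hk'
  simp only [map_sub, LinearMap.sub_apply, map_smul, LinearMap.smul_apply, smul_eq_mul, hN, hsymm,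
    hr] at hk' hN'
  have hk0 : (k : ℂ) ≠ 0 := by exact_mod_cast (by omega : k ≠ 0)
  have h2 : 2 * (rootSystem H).RootForm γ ((rootSystem H).root i) = k * r := by
    apply mul_left_cancel₀ hk0
    linear_combination -hk'
  have h3 : (N' : ℤ) = N - (k - 1) * r := by
    have : (N' : ℂ) = N - (k - 1) * r := by linear_combination -hN' - h2
    exact_mod_cast this
  have h4 : 0 < (k - 1) * (r : ℤ) := by
    have : 0 < r := Nat.pos_of_ne_zero hr0
    exact mul_pos (by omega) (by exact_mod_cast this)
  omega

end Cartan

variable {g A L : Type*} [LieRing g] [LieAlgebra ℂ g] [CommRing A] [Algebra ℂ A]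
  [LieRing L] [LieAlgebra ℂ L] (S : LoopAffVir g A L)
  (V : Type*) [AddCommGroup V] [Module ℂ V] [LieRingModule L V] [LieModule ℂ L V]

/-- The joint eigenspace of `h̊` and `d₀` for the eigenvalues `γ ∈ h̊*` and `z ∈ ℂ`. -/
def jointSpace (γ : Module.Dual ℂ S.H) (z : ℂ) : Submodule ℂ V where
  carrier := {v : V | (∀ h : S.H, ⁅S.E 0 (h : g) 1, v⁆ = γ h • v) ∧ ⁅S.D 0 1, v⁆ = z • v}
  add_mem' := fun ha hb =>
    ⟨fun h => by rw [lie_add, ha.1 h, hb.1 h, smul_add], by rw [lie_add, ha.2, hb.2, smul_add]⟩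
  zero_mem' := by simp
  smul_mem' := fun c v hv =>
    ⟨fun h => by rw [lie_smul, hv.1 h, smul_comm], by rw [lie_smul, hv.2, smul_comm]⟩

variable {V}

theorem lie_D_zero_E (n : ℤ) (x : g) (a : A) : ⁅S.D 0 1, S.E n x a⁆ = (n : ℂ) • S.E n x a := by
  rw [S.lie_DE, add_zero, one_mul]

theorem lie_E_mem_jointSpace {γ α : Module.Dual ℂ S.H} {x : g} (hx : x ∈ S.rootSp α) (n : ℤ)
    {z : ℂ} {v : V} (hv : v ∈ S.jointSpace V γ z) :
    ⁅S.E n x 1, v⁆ ∈ S.jointSpace V (γ + α) (z + n) := by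
  refine ⟨fun h => ?_, ?_⟩
  · have : ⁅S.E 0 (h : g) 1, S.E n x 1⁆ = α h • S.E n x 1 := by
      rw [S.lie_EE, (S.rootSp_def α x).mp hx h]
      simp
    rw [leibniz_lie, this, hv.1 h, lie_smul, smul_lie, LinearMap.add_apply, add_smul, add_comm]
  · rw [leibniz_lie, S.lie_D_zero_E, hv.2, lie_smul, smul_lie, add_smul, add_comm]

theorem toEnd_E_mul (hK0 : ∀ v : V, ⁅S.K 1, v⁆ = 0) (n m : ℤ) (x y : g) :
    LieModule.toEnd ℂ L V (S.E n x 1) * LieModule.toEnd ℂ L V (S.E m y 1)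
      = LieModule.toEnd ℂ L V (S.E m y 1) * LieModule.toEnd ℂ L V (S.E n x 1)
        + LieModule.toEnd ℂ L V (S.E (n + m) ⁅x, y⁆ 1) := by
  ext v
  simp only [Module.End.mul_apply, LinearMap.add_apply, LieModule.toEnd_apply_apply]
  rw [leibniz_lie, S.lie_EE, add_lie, smul_lie, mul_one, hK0, smul_zero, add_zero, add_comm]

section Root

open LieAlgebra LieAlgebra.IsKilling LieModule

theorem exists_pow_E_eq_zero (hInt : S.IsIntegrable V)
    {α : Module.Dual ℂ S.H} (hα : α ≠ 0) {x : g} (hx : x ∈ S.rootSp α)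
    (n : ℤ) (v : V) : ∃ N : ℕ, (LieModule.toEnd ℂ L V (S.E n x 1) ^ N) v = 0 := by
  by_cases h : S.rootSp α = ⊥
  · rw [h, Submodule.mem_bot] at hx
    exact ⟨1, by simp [hx]⟩
  · exact hInt.2.2 α hα h x hx n 1 v

variable [FiniteDimensional ℂ g] [LieAlgebra.IsKilling ℂ g] [S.H.IsCartanSubalgebra]

theorem mem_rootSp_of_mem_rootSpace {α : Module.Dual ℂ S.H} {x : g} (hx : x ∈ rootSpace S.H α) :
    x ∈ S.rootSp α :=
  (S.rootSp_def α x).mpr fun h => lie_eq_smul_of_mem_rootSpace hx h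

theorem exists_root_vectors (i : S.H.root) :
    ∃ e ∈ S.rootSp ((rootSystem S.H).root i), ∃ f ∈ S.rootSp (-(rootSystem S.H).root i),
      e ≠ 0 ∧ f ≠ 0 ∧
      ⁅e, f⁆ = (coroot i.1 : S.H) ∧ ⁅((coroot i.1 : S.H) : g), e⁆ = (2 : ℂ) • e ∧
      ⁅((coroot i.1 : S.H) : g), f⁆ = -((2 : ℂ) • f) := by
  have hi := S.H.isNonZero_coe_root i
  obtain ⟨h, e, f, ht, he, hf⟩ := exists_isSl2Triple_of_weight_isNonZero hi
  have hh := ht.h_eq_coroot hi he hf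
  rw [← hh]
  exact ⟨e, S.mem_rootSp_of_mem_rootSpace he, f, S.mem_rootSp_of_mem_rootSpace hf, ht.e_ne_zero,
    ht.f_ne_zero, ht.lie_e_f, ht.lie_h_e_smul ℂ, ht.lie_lie_smul_f ℂ⟩

theorem rootSystem_root_ne_zero (i : S.H.root) : (rootSystem S.H).root i ≠ 0 := by
  simp

variable {γ : Module.Dual ℂ S.H} {z : ℂ}

theorem exists_sl2_operators (hInt : S.IsIntegrable V)
    (hK0 : ∀ v : V, ⁅S.K 1, v⁆ = 0)
    (i : S.H.root) (n : ℤ) :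
    ∃ e ∈ S.rootSp ((rootSystem S.H).root i), ∃ f ∈ S.rootSp (-(rootSystem S.H).root i),
      ∃ T F h : Module.End ℂ V,
      T = LieModule.toEnd ℂ L V (S.E n e 1) ∧ F = LieModule.toEnd ℂ L V (S.E (-n) f 1) ∧
      h = LieModule.toEnd ℂ L V (S.E 0 (coroot i.1 : S.H) 1) ∧
      T * F = F * T + h ∧ h * T = T * h + 2 * T ∧ h * F = F * h - 2 * F ∧
      (∀ v, ∃ N, (T ^ N) v = 0) ∧ (∀ v, ∃ N, (F ^ N) v = 0) := by
  obtain ⟨e, he, f, hf, -, -, hef, hhe, hhf⟩ := S.exists_root_vectors i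
  refine ⟨e, he, f, hf, _, _, _, rfl, rfl, rfl, ?_, ?_, ?_,
    S.exists_pow_E_eq_zero hInt (S.rootSystem_root_ne_zero i) he n,
    S.exists_pow_E_eq_zero hInt (neg_ne_zero.mpr (S.rootSystem_root_ne_zero i)) hf (-n)⟩
  · rw [S.toEnd_E_mul hK0, hef, add_neg_cancel]
  · rw [S.toEnd_E_mul hK0, hhe, zero_add]
    ext v
    simp [two_smul, two_mul]
  · rw [S.toEnd_E_mul hK0, hhf, zero_add]
    ext v
    simp [two_smul, two_mul, sub_eq_add_neg]

theorem exists_int_of_jointSpace_ne_bot (hInt : S.IsIntegrable V)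
    (hK0 : ∀ v : V, ⁅S.K 1, v⁆ = 0)
    (h : S.jointSpace V γ z ≠ ⊥) (i : S.H.root) :
    ∃ k : ℤ, γ (coroot i.1) = k := by
  obtain ⟨v, hv, hv0⟩ := (Submodule.ne_bot_iff _).mp h
  obtain ⟨e, he, f, hf, T, F, h, -, -, rfl, h1, h2, h3, h4, h5⟩ :=
    S.exists_sl2_operators hInt hK0 i 0
  exact exists_int_of_sl2_integrable h1 h2 h3 h4 h5 (hv.1 _) hv0

/-- If `⟨γ, α∨⟩ ≥ 1`, the root vectors of loop degree `n` and `-n` give an injection from the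
`γ`-weight space to the `γ - α`-weight space and, in finite dimension, a surjection back. -/
theorem jointSpace_sub_root (hInt : S.IsIntegrable V)
    (hK0 : ∀ v : V, ⁅S.K 1, v⁆ = 0)
    (i : S.H.root) (n : ℤ) {k : ℤ} (hk : γ (coroot i.1) = k)
    (hk1 : 1 ≤ k) :
    (S.jointSpace V γ z ≠ ⊥ → S.jointSpace V (γ - (rootSystem S.H).root i) (z - n) ≠ ⊥) ∧
    (FiniteDimensional ℂ (S.jointSpace V γ z) → ∀ v ∈ S.jointSpace V γ z,
      ∃ e : g, ∃ w ∈ S.jointSpace V (γ - (rootSystem S.H).root i) (z - n),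
        v = ⁅S.E n e 1, w⁆) := by
  obtain ⟨e, he, f, hf, T, F, h, hT, hF, hh, h1, h2, h3, h4, h5⟩ :=
    S.exists_sl2_operators hInt hK0 (V := V) i n
  have hFm : ∀ v ∈ S.jointSpace V γ z,
      F v ∈ S.jointSpace V (γ - (rootSystem S.H).root i) (z - n) := by
    intro v hv
    have := S.lie_E_mem_jointSpace hf (-n) hv
    rw [hF, LieModule.toEnd_apply_apply]
    simpa [sub_eq_add_neg] using this
  have hTm : ∀ v ∈ S.jointSpace V (γ - (rootSystem S.H).root i) (z - n),
      T v ∈ S.jointSpace V γ z := by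
    intro v hv
    have := S.lie_E_mem_jointSpace he n hv
    rw [hT, LieModule.toEnd_apply_apply]
    simpa using this
  have hinj : ∀ v ∈ S.jointSpace V γ z, T (F v) = 0 → v = 0 := by
    intro v hv h0
    refine eq_zero_of_sl2_ef_eq_zero h1 h2 (m := k) (fun N => ?_) ?_ (h4 v) h0
    · exact_mod_cast (by omega : k + N ≠ 0)
    · rw [hh, LieModule.toEnd_apply_apply, hv.1, hk]
  constructor
  · intro hne
    obtain ⟨v, hv, hv0⟩ := (Submodule.ne_bot_iff _).mp hne
    refine (Submodule.ne_bot_iff _).mpr ⟨F v, hFm v hv, fun h0 => hv0 (hinj v hv ?_)⟩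
    rw [h0, map_zero]
  · intro hfd v hv
    have hmaps : ∀ w ∈ S.jointSpace V γ z, (T * F) w ∈ S.jointSpace V γ z :=
      fun w hw => hTm _ (hFm _ hw)
    have hsurj : Function.Surjective ((T * F).restrict hmaps) := by
      rw [← LinearMap.injective_iff_surjective]
      refine (injective_iff_map_eq_zero _).mpr fun w hw => ?_
      exact Subtype.ext (hinj w w.2 (congrArg Subtype.val hw))
    obtain ⟨w, hw⟩ := hsurj ⟨v, hv⟩
    refine ⟨e, F w, hFm _ w.2, ?_⟩
    rw [← LieModule.toEnd_apply_apply ℂ, ← hT]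
    exact (congrArg Subtype.val hw).symm

end Root

theorem isLocallyFiniteEnd_of_mem_cartan (hW : S.IsWeightModule V) (h : S.H) :
    IsLocallyFiniteEnd (LieModule.toEnd ℂ L V (S.E 0 (h : g) 1)) := by
  intro v
  have hv : v ∈ ⨆ χ : Module.Dual ℂ S.cartan, S.wtSpace V χ := by rw [hW]; trivial
  induction hv using Submodule.iSup_induction' with
  | mem χ x hx =>
    refine ⟨ℂ ∙ x, inferInstance, Submodule.mem_span_singleton_self x, fun w hw => ?_⟩
    obtain ⟨t, rfl⟩ := Submodule.mem_span_singleton.mp hw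
    have := hx (S.eH h)
    simp only [eH] at this
    rw [map_smul, LieModule.toEnd_apply_apply, this]
    exact Submodule.smul_mem _ _ (Submodule.smul_mem _ _ (Submodule.mem_span_singleton_self x))
  | zero => exact ⟨⊥, inferInstance, Submodule.zero_mem _, by simp⟩
  | add x y _ _ hx hy =>
    obtain ⟨W, hWf, hxW, hWT⟩ := hx
    obtain ⟨W', hWf', hyW', hWT'⟩ := hy
    refine ⟨W ⊔ W', inferInstance, Submodule.add_mem_sup hxW hyW', fun w hw => ?_⟩
    obtain ⟨a, ha, b, hb, rfl⟩ := Submodule.mem_sup.mp hw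
    rw [map_add]
    exact Submodule.add_mem_sup (hWT a ha) (hWT' b hb)

theorem jointSpace_eq_wtSpace {γ : Module.Dual ℂ S.H} {χ : Module.Dual ℂ S.cartan} {c : ℂ}
    (hK0 : ∀ v : V, ⁅S.K 1, v⁆ = 0) (hC : ∀ v : V, ⁅S.C 1, v⁆ = c • v)
    (hχH : ∀ h, χ (S.eH h) = γ h) (hχK : χ S.K1 = 0) (hχC : χ S.C1 = c) :
    S.jointSpace V γ (χ S.d0) = S.wtSpace V χ := by
  ext v
  constructor
  · rintro ⟨hv, hvd⟩ ⟨h, hh⟩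
    change ⁅h, v⁆ = χ ⟨h, hh⟩ • v
    have hh' := hh
    rw [cartan] at hh'
    induction hh' using Submodule.span_induction with
    | mem x hx =>
      rcases hx with ⟨h, hH, rfl⟩ | rfl | rfl | rfl
      · exact (hv ⟨h, hH⟩).trans (by rw [← hχH]; rfl)
      · exact (hK0 v).trans (by change _ = χ S.K1 • v; rw [hχK, zero_smul])
      · exact hvd
      · exact (hC v).trans (by change _ = χ S.C1 • v; rw [hχC])
    | zero =>
      rw [zero_lie, show (⟨0, hh⟩ : S.cartan) = 0 from rfl, map_zero, zero_smul]
    | add x y hx hy ihx ihy =>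
      rw [add_lie, ihx hx, ihy hy, ← add_smul, ← map_add]; rfl
    | smul t x hx ihx =>
      rw [smul_lie, ihx hx, smul_smul, ← smul_eq_mul, ← map_smul]; rfl
  · intro hv
    exact ⟨fun h => (hv (S.eH h)).trans (by rw [hχH]), hv S.d0⟩

theorem cartan_dual_ext {χ χ' : Module.Dual ℂ S.cartan} (hH : ∀ h, χ (S.eH h) = χ' (S.eH h))
    (hK : χ S.K1 = χ' S.K1) (hd : χ S.d0 = χ' S.d0) (hC : χ S.C1 = χ' S.C1) : χ = χ' := by
  refine LinearMap.ext ?_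
  rintro ⟨h, hh⟩
  have hh' := hh
  rw [cartan] at hh'
  induction hh' using Submodule.span_induction with
  | mem x hx =>
    rcases hx with ⟨h, hH', rfl⟩ | rfl | rfl | rfl
    · exact hH ⟨h, hH'⟩
    · exact hK
    · exact hd
    · exact hC
  | zero => exact (map_zero χ).trans (map_zero χ').symm
  | add x y hx hy ihx ihy =>
    have := congrArg₂ (· + ·) (ihx hx) (ihy hy)
    simp only [← map_add] at this
    exact this
  | smul t x hx ihx =>
    have := congrArg (t • ·) (ihx hx)
    simp only [← map_smul] at this
    exact this

/-- The linear map `h̊ → h̄`. -/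
def eHLinear : S.H →ₗ[ℂ] S.cartan where
  toFun := S.eH
  map_add' x y := Subtype.ext (by simp [eH])
  map_smul' t x := Subtype.ext (by simp [eH])

section Stable

open LieAlgebra LieAlgebra.IsKilling LieModule

variable [FiniteDimensional ℂ g] [LieAlgebra.IsKilling ℂ g] [S.H.IsCartanSubalgebra]

/-- Finite-dimensional subspaces are contained in finite-dimensional `g̊`-stable subspaces. -/
theorem exists_finiteDimensional_E_stable (hInt : S.IsIntegrable V)
    (hK0 : ∀ v : V, ⁅S.K 1, v⁆ = 0)
    (X : Submodule ℂ V) [FiniteDimensional ℂ X] :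
    ∃ P : Submodule ℂ V, FiniteDimensional ℂ P ∧ X ≤ P ∧
      ∀ y : g, ∀ v ∈ P, ⁅S.E 0 y 1, v⁆ ∈ P := by
  let T : Set g := {x | IsLocallyFiniteEnd (LieModule.toEnd ℂ L V (S.E 0 x 1))}
  have hT : Submodule.span ℂ T = ⊤ := by
    have h := LieSubmodule.iSup_toSubmodule_eq_top.mpr (iSup_genWeightSpace_eq_top' ℂ S.H g)
    rw [eq_top_iff, ← h]
    refine iSup_le fun χ x hx => ?_
    by_cases hχ : χ.IsZero
    · have hx' : x ∈ rootSpace S.H (0 : S.H → ℂ) := by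
        have h0 : (χ : S.H → ℂ) = 0 := hχ
        rw [← h0]; exact hx
      have hxH : x ∈ S.H := by
        rwa [rootSpace_zero_eq, LieSubalgebra.mem_toLieSubmodule] at hx'
      exact Submodule.subset_span (S.isLocallyFiniteEnd_of_mem_cartan hInt.1 ⟨x, hxH⟩)
    · have hχ' : Weight.toLinear ℂ S.H g χ ≠ 0 := by simpa using hχ
      refine Submodule.subset_span (isLocallyFiniteEnd_of_locally_nilpotent ?_)
      exact S.exists_pow_E_eq_zero hInt hχ' (S.mem_rootSp_of_mem_rootSpace hx) 0
  let b := Module.Basis.ofSpan hT.ge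
  let ρ : g →ₗ[ℂ] Module.End ℂ V :=
    { toFun := fun x => LieModule.toEnd ℂ L V (S.E 0 x 1)
      map_add' := fun x y => by simp
      map_smul' := fun t x => by simp }
  obtain ⟨P, hP⟩ := exists_finiteDimensional_stable (ρ := ρ) (s := b) b.span_eq
    (fun x y => by simpa [ρ] using S.toEnd_E_mul hK0 0 0 x y)
    (fun i => Module.Basis.ofSpan_subset hT.ge ⟨i, rfl⟩) X
  exact ⟨P, hP⟩

theorem exists_neg_coroot (i : S.H.root) : ∃ j : S.H.root, ∀ γ : Module.Dual ℂ S.H,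
    γ (coroot j.1) = -γ (coroot i.1) := by
  refine ⟨(rootSystem S.H).reflectionPerm i i, fun γ => ?_⟩
  rw [← map_neg]
  have h := (rootSystem S.H).coroot_reflectionPerm i i
  rw [RootPairing.coreflection_apply_self] at h
  exact congrArg γ h

theorem finite_setOf_jointSpace_ne_bot (hInt : S.IsIntegrable V)
    (hK0 : ∀ v : V, ⁅S.K 1, v⁆ = 0)
    (z : ℂ)
    (hfd : ∀ γ, FiniteDimensional ℂ (S.jointSpace V γ z)) :
    {γ | S.jointSpace V γ z ≠ ⊥}.Finite := by
  let small : Set (Module.Dual ℂ S.H) :=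
    {γ | ∀ i : S.H.root, γ (coroot i.1) ∈ ({-1, 0, 1} : Set ℂ)}
  have hsmall : small.Finite := finite_setOf_forall_apply_coroot_mem S.H _ fun _ => by simp
  have := hsmall.to_subtype
  obtain ⟨P, hPf, hP, hst⟩ := S.exists_finiteDimensional_E_stable hInt hK0
    (⨆ γ : small, S.jointSpace V γ z)
  have key : ∀ N : ℕ, ∀ γ, S.jointSpace V γ z ≠ ⊥ → (rootSystem S.H).RootForm γ γ = N →
      S.jointSpace V γ z ≤ P := by
    intro N
    induction N using Nat.strong_induction_on with
    | _ N ih =>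
      intro γ hγ hN
      have hint := fun i => S.exists_int_of_jointSpace_ne_bot hInt hK0 hγ i
      by_cases hbig : ∃ (i : S.H.root) (k : ℤ), γ (coroot i.1) = k ∧ 2 ≤ k
      · obtain ⟨i, k, hk, hk2⟩ := hbig
        obtain ⟨N', hlt, hN'⟩ := exists_lt_rootForm_sub_root S.H hint hN i hk hk2
        have hs := S.jointSpace_sub_root hInt hK0 (z := z) i 0 hk (by omega)
        rw [Int.cast_zero, sub_zero] at hs
        have hle := ih N' hlt _ (hs.1 hγ) hN'
        intro v hv
        obtain ⟨e, w, hw, rfl⟩ := hs.2 (hfd γ) v hv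
        exact hst e w (hle hw)
      · push Not at hbig
        have hmem : γ ∈ small := by
          intro i
          obtain ⟨k, hk⟩ := hint i
          obtain ⟨j, hj⟩ := S.exists_neg_coroot i
          have h1 := hbig i k hk
          have h2 := hbig j (-k) (by rw [hj, hk, Int.cast_neg])
          have : k = -1 ∨ k = 0 ∨ k = 1 := by omega
          rcases this with rfl | rfl | rfl <;> simp [hk]
        exact (le_iSup (fun γ : small => S.jointSpace V γ z) ⟨γ, hmem⟩).trans hP
  let R (i : S.H.root) : Module.End ℂ P :=
    (LieModule.toEnd ℂ L V (S.E 0 (coroot i.1 : S.H) 1)).restrict (hst _)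
  refine (finite_setOf_forall_apply_coroot_mem S.H (fun i => {μ | (R i).HasEigenvalue μ})
    fun i => Module.End.finite_hasEigenvalue (R i)).subset fun γ hγ i => ?_
  obtain ⟨N, hN⟩ := exists_nat_rootForm S.H γ
    fun i => S.exists_int_of_jointSpace_ne_bot hInt hK0 hγ i
  obtain ⟨v, hv, hv0⟩ := (Submodule.ne_bot_iff _).mp hγ
  refine Module.End.hasEigenvalue_of_hasEigenvector (x := ⟨v, key N γ hγ hN hv⟩)
    ⟨Module.End.mem_eigenspace_iff.mpr (Subtype.ext (hv.1 _)), fun h => hv0 ?_⟩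
  exact congrArg Subtype.val h

theorem exists_finite_jointSpace_ne_bot (hInt : S.IsIntegrable V)
    (hK0 : ∀ v : V, ⁅S.K 1, v⁆ = 0)
    (ξ : ℂ)
    (hfd : ∀ γ, FiniteDimensional ℂ (S.jointSpace V γ ξ)) :
    ∃ F : Set (Module.Dual ℂ S.H), F.Finite ∧
      ∀ γ, ∀ n : ℤ, S.jointSpace V γ (ξ + n) ≠ ⊥ → γ ∈ F := by
  have hF := S.finite_setOf_jointSpace_ne_bot hInt hK0 ξ hfd
  refine ⟨{0} ∪ Set.image2 (· + ·) {γ | S.jointSpace V γ ξ ≠ ⊥}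
    (Set.range (rootSystem S.H).root), (Set.finite_singleton 0).union
      (hF.image2 _ (Set.finite_range _)), fun γ n hγ => ?_⟩
  have hint := fun i => S.exists_int_of_jointSpace_ne_bot hInt hK0 hγ i
  by_cases hbig : ∃ (i : S.H.root) (k : ℤ), γ (coroot i.1) = k ∧ 1 ≤ k
  · obtain ⟨i, k, hk, hk1⟩ := hbig
    have hs := (S.jointSpace_sub_root hInt hK0 (z := ξ + n) i n hk hk1).1 hγ
    rw [add_sub_cancel_right] at hs
    exact Or.inr ⟨_, hs, _, ⟨i, rfl⟩, sub_add_cancel _ _⟩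
  · push Not at hbig
    left
    have hspan := RootPairing.IsRootSystem.span_coroot_eq_top (P := rootSystem S.H)
    refine LinearMap.ext_on_range (v := (rootSystem S.H).coroot) hspan fun i => ?_
    change γ (coroot i.1) = 0
    obtain ⟨k, hk⟩ := hint i
    obtain ⟨j, hj⟩ := S.exists_neg_coroot i
    have h1 := hbig i k hk
    have h2 := hbig j (-k) (by rw [hj, hk, Int.cast_neg])
    rw [hk, show k = 0 by omega, Int.cast_zero]

end Stable

/-- On an irreducible module the eigenvalues of `d₀` lie in a single coset of `ℤ`. -/
theorem exists_int_of_d0Eig_ne_bot (hIrr : IsSimpleOrder (LieSubmodule ℂ L V))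
    {ξ μ : ℂ} (hξ : S.d0Eig V ξ ≠ ⊥) (hμ : S.d0Eig V μ ≠ ⊥) :
    ∃ n : ℤ, μ = ξ + n := by
  have heig : ∀ ν : ℂ, S.d0Eig V ν = (LieModule.toEnd ℂ L V (S.D 0 1)).eigenspace ν := fun ν => by
    ext v
    exact (Module.End.mem_eigenspace_iff (f := LieModule.toEnd ℂ L V (S.D 0 1))).symm
  let U : Submodule ℂ V := ⨆ n : ℤ, S.d0Eig V (ξ + n)
  have hshift : ∀ (x : L) (n : ℤ), ⁅S.D 0 1, x⁆ = (n : ℂ) • x → ∀ v ∈ U, ⁅x, v⁆ ∈ U := by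
    intro x n hx v hv
    induction hv using Submodule.iSup_induction' with
    | mem m w hw =>
      refine (le_iSup (fun n : ℤ => S.d0Eig V (ξ + n)) (m + n)) ?_
      change ⁅S.D 0 1, ⁅x, w⁆⁆ = _
      rw [leibniz_lie, hx, show ⁅S.D 0 1, w⁆ = _ from hw, smul_lie, lie_smul, ← add_smul]
      congr 1
      push_cast
      ring
    | zero => simp
    | add a b _ _ ha hb => rw [lie_add]; exact Submodule.add_mem _ ha hb
  have hstable : ∀ x : L, ∀ v ∈ U, ⁅x, v⁆ ∈ U := by
    intro x
    have hx : x ∈ (⊤ : Submodule ℂ L) := trivial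
    rw [← S.span_top] at hx
    induction hx using Submodule.span_induction with
    | mem x hx =>
      rcases hx with ((⟨n, y, a, rfl⟩ | ⟨n, a, rfl⟩) | ⟨a, rfl⟩) | ⟨a, rfl⟩
      · exact hshift _ n (S.lie_D_zero_E n y a)
      · refine hshift _ n ?_
        rw [S.lie_DD, zero_add, one_mul]
        simp
      · refine hshift _ 0 ?_
        rw [← lie_skew, S.K_central]
        simp
      · refine hshift _ 0 ?_
        rw [← lie_skew, S.C_central]
        simp
    | zero => simp
    | add x y _ _ hx hy =>
      exact fun v hv => by rw [add_lie]; exact Submodule.add_mem _ (hx v hv) (hy v hv)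
    | smul t x _ hx => exact fun v hv => by rw [smul_lie]; exact Submodule.smul_mem _ _ (hx v hv)
  let W : LieSubmodule ℂ L V := { U with lie_mem := fun {x v} hv => hstable x v hv }
  have hU : U = ⊤ := by
    have hW : W ≠ ⊥ := by
      intro h
      refine hξ (eq_bot_iff.mpr fun v hv => ?_)
      have hvU : v ∈ W := (le_iSup (fun n : ℤ => S.d0Eig V (ξ + n)) 0) (by simpa using hv)
      rw [h] at hvU
      exact hvU
    have := (hIrr.eq_bot_or_eq_top W).resolve_left hW
    exact congrArg LieSubmodule.toSubmodule this
  by_contra! hne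
  refine hμ ?_
  have hind := (LieModule.toEnd ℂ L V (S.D 0 1)).eigenspaces_iSupIndep μ
  have hle : U ≤ ⨆ ν, ⨆ (_ : ν ≠ μ), (LieModule.toEnd ℂ L V (S.D 0 1)).eigenspace ν := by
    refine iSup_le fun n => ?_
    rw [heig]
    exact le_iSup₂_of_le (ξ + n) (hne n).symm le_rfl
  rw [hU, top_le_iff] at hle
  rw [hle, disjoint_top] at hind
  rw [heig, hind]

end LoopAffVir

/-- Under the standing hypotheses, there exist a positive integer `p` and
`γ̄₁, …, γ̄_p ∈ h̊*` such that `P(V) ⊆ {γ̄ᵢ + (ξ + n)δ + cω : 1 ≤ i ≤ p, n ∈ ℤ}`. -/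
theorem statement10
    {g A L : Type*} [LieRing g] [LieAlgebra ℂ g] [FiniteDimensional ℂ g]
    [LieAlgebra.IsSimple ℂ g]
    [CommRing A] [Algebra ℂ A] [Algebra.FiniteType ℂ A]
    [LieRing L] [LieAlgebra ℂ L]
    (S : LoopAffVir g A L)
    (V : Type*) [AddCommGroup V] [Module ℂ V] [LieRingModule L V] [LieModule ℂ L V]
    (hIrr : IsSimpleOrder (LieSubmodule ℂ L V))
    (hInt : S.IsIntegrable V)
    (hK0 : ∀ v : V, ⁅S.K 1, v⁆ = 0)
    (c : ℂ) (hC : ∀ v : V, ⁅S.C 1, v⁆ = c • v)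
    (ext : Module.Dual ℂ S.H →ₗ[ℂ] Module.Dual ℂ S.cartan)
    (hextH : ∀ (χ : Module.Dual ℂ S.H) (h : S.H), ext χ (S.eH h) = χ h)
    (hextK : ∀ χ : Module.Dual ℂ S.H, ext χ S.K1 = 0)
    (hextd : ∀ χ : Module.Dual ℂ S.H, ext χ S.d0 = 0)
    (hextC : ∀ χ : Module.Dual ℂ S.H, ext χ S.C1 = 0)
    (δf : Module.Dual ℂ S.cartan)
    (hδH : ∀ h : S.H, δf (S.eH h) = 0) (hδK : δf S.K1 = 0)
    (hδd : δf S.d0 = 1) (hδC : δf S.C1 = 0)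
    (ωf : Module.Dual ℂ S.cartan)
    (hωH : ∀ h : S.H, ωf (S.eH h) = 0) (hωK : ωf S.K1 = 0)
    (hωd : ωf S.d0 = 0) (hωC : ωf S.C1 = 1)
    :
    ∃ (p : ℕ) (γs : Fin p → Module.Dual ℂ S.H) (ξ : ℂ), 0 < p ∧
      ∀ χ ∈ S.weights V, ∃ (i : Fin p) (n : ℤ),
        χ = ext (γs i) + (ξ + (n : ℂ)) • δf + c • ωf := by
  have := S.isCartan
  rcases (S.weights V).eq_empty_or_nonempty with hempty | ⟨χ₀, hχ₀⟩
  · exact ⟨1, fun _ => 0, 0, one_pos, fun χ hχ => by simp [hempty] at hχ⟩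
  have hd0 : ∀ χ ∈ S.weights V, S.d0Eig V (χ S.d0) ≠ ⊥ := fun χ hχ h =>
    hχ (le_bot_iff.mp (h ▸ fun v hv => hv S.d0))
  have hfd : ∀ γ, FiniteDimensional ℂ (S.jointSpace V γ (χ₀ S.d0)) := fun γ => by
    have h := S.jointSpace_eq_wtSpace (V := V) (γ := γ)
      (χ := ext γ + χ₀ S.d0 • δf + c • ωf) hK0 hC (by simp [hextH, hδH, hωH])
      (by simp [hextK, hδK, hωK]) (by simp [hextC, hδC, hωC])
    rw [show (ext γ + χ₀ S.d0 • δf + c • ωf) S.d0 = χ₀ S.d0 by simp [hextd, hδd, hωd]] at h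
    rw [h]
    exact hInt.2.1 _
  obtain ⟨F, hF, hmem⟩ := S.exists_finite_jointSpace_ne_bot hInt hK0 (χ₀ S.d0) hfd
  have hF' := (hF.insert 0).fintype
  refine ⟨Fintype.card ↥(insert 0 F), fun i => ((Fintype.equivFin ↥(insert 0 F)).symm i).1,
    χ₀ S.d0, Fintype.card_pos_iff.mpr ⟨⟨0, Set.mem_insert 0 F⟩⟩, fun χ hχ => ?_⟩
  obtain ⟨v, hv, hv0⟩ := (Submodule.ne_bot_iff _).mp hχ
  have hχK : χ S.K1 = 0 := by
    have := (hv S.K1).symm.trans (hK0 v)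
    exact (smul_eq_zero.mp this).resolve_right hv0
  have hχC : χ S.C1 = c := smul_left_injective ℂ hv0 ((hv S.C1).symm.trans (hC v))
  obtain ⟨n, hn⟩ := S.exists_int_of_d0Eig_ne_bot hIrr (hd0 χ₀ hχ₀) (hd0 χ hχ)
  have hγ := S.jointSpace_eq_wtSpace (γ := χ ∘ₗ S.eHLinear) hK0 hC (fun _ => rfl) hχK hχC
  have hγF := hmem (χ ∘ₗ S.eHLinear) n (by rw [← hn, hγ]; exact hχ)
  refine ⟨Fintype.equivFin _ ⟨_, Set.mem_insert_of_mem 0 hγF⟩, n,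
    S.cartan_dual_ext (fun h => ?_) ?_ ?_ ?_⟩
  · simp [hextH, hδH, hωH, LoopAffVir.eHLinear]
  · simp [hextK, hδK, hωK, hχK]
  · simp [hextd, hδd, hωd, hn]
  · simp [hextC, hδC, hωC, hχC]
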